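/- Under the adapted pure-frontal setup with focal data, assume κ_t(0) ≠ 0 and that 0 is a V_j-ridge point of f, i.e. (V_jκ_j)(0) = 0. Then the gradient of the function V_jρ_j at 0 is nonzero (i.e. 0 is a non-degenerate singular point of the focal surface C_j) if and only if r_c'(0) ≠ 0 or (V_jV_jκ_j)(0) ≠ 0 (i.e. 0 is a first order V_j-ridge point of f). -/

import Mathlib

open Filter

noncomputable section

/-- Vectors in ℝ³, modeled as `Fin 3 → ℝ`. -/
abbrev R3 : Type := Fin 3 → ℝ

/-- The Euclidean inner product on ℝ³. -/
def dot3 (a b : R3) : ℝ := a 0 * b 0 + a 1 * b 1 + a 2 * b 2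

/-- The Euclidean norm on ℝ³. -/
def norm3 (a : R3) : ℝ := Real.sqrt (dot3 a a)

/-- Partial derivative in the `u`-direction. -/
def pu {E : Type*} [NormedAddCommGroup E] [NormedSpace ℝ E] (F : ℝ × ℝ → E) (p : ℝ × ℝ) : E :=
  fderiv ℝ F p (1, 0)

/-- Partial derivative in the `v`-direction. -/
def pv {E : Type*} [NormedAddCommGroup E] [NormedSpace ℝ E] (F : ℝ × ℝ → E) (p : ℝ × ℝ) : E :=
  fderiv ℝ F p (0, 1)

/-- The adapted pure-frontal setup: `f` is a frontal with unit normal `ν`,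
`f_v = v·h`, `ν_v = v·ν₁`, the frame `{f_u, h, ν}` is linearly independent everywhere
and orthonormal along the `u`-axis. -/
structure AdaptedPureFrontal (f ν h ν₁ : ℝ × ℝ → R3) : Prop where
  smooth_f : ContDiff ℝ (⊤ : ℕ∞) f
  smooth_ν : ContDiff ℝ (⊤ : ℕ∞) ν
  smooth_h : ContDiff ℝ (⊤ : ℕ∞) h
  smooth_ν₁ : ContDiff ℝ (⊤ : ℕ∞) ν₁
  unit_ν : ∀ p, dot3 (ν p) (ν p) = 1
  orth_fu_ν : ∀ p, dot3 (pu f p) (ν p) = 0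
  orth_fv_ν : ∀ p, dot3 (pv f p) (ν p) = 0
  fv_eq : ∀ p : ℝ × ℝ, pv f p = p.2 • h p
  νv_eq : ∀ p : ℝ × ℝ, pv ν p = p.2 • ν₁ p
  indep : ∀ p, LinearIndependent ℝ ![pu f p, h p, ν p]
  adapted_fu : ∀ u : ℝ, dot3 (pu f (u, 0)) (pu f (u, 0)) = 1
  adapted_h : ∀ u : ℝ, dot3 (h (u, 0)) (h (u, 0)) = 1
  adapted_fu_h : ∀ u : ℝ, dot3 (pu f (u, 0)) (h (u, 0)) = 0
  adapted_h_ν : ∀ u : ℝ, dot3 (h (u, 0)) (ν (u, 0)) = 0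

/-- Ẽ = ⟨f_u, f_u⟩. -/
def Et (f : ℝ × ℝ → R3) (p : ℝ × ℝ) : ℝ := dot3 (pu f p) (pu f p)

/-- F̃ = ⟨f_u, h⟩. -/
def Ft (f h : ℝ × ℝ → R3) (p : ℝ × ℝ) : ℝ := dot3 (pu f p) (h p)

/-- G̃ = ⟨h, h⟩. -/
def Gt (h : ℝ × ℝ → R3) (p : ℝ × ℝ) : ℝ := dot3 (h p) (h p)

/-- L̃ = −⟨f_u, ν_u⟩. -/
def Lt (f ν : ℝ × ℝ → R3) (p : ℝ × ℝ) : ℝ := -dot3 (pu f p) (pu ν p)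

/-- M̃ = −⟨h, ν_u⟩. -/
def Mt (h ν : ℝ × ℝ → R3) (p : ℝ × ℝ) : ℝ := -dot3 (h p) (pu ν p)

/-- Ñ₁ = −⟨h, ν₁⟩. -/
def Nt1 (h ν₁ : ℝ × ℝ → R3) (p : ℝ × ℝ) : ℝ := -dot3 (h p) (ν₁ p)

/-- The Gaussian curvature K = (L̃Ñ₁ − M̃²)/(ẼG̃ − F̃²). -/
def Kg (f ν h ν₁ : ℝ × ℝ → R3) (p : ℝ × ℝ) : ℝ :=
  (Lt f ν p * Nt1 h ν₁ p - Mt h ν p ^ 2) / (Et f p * Gt h p - Ft f h p ^ 2)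

/-- The mean curvature H = (ẼÑ₁ − 2F̃M̃ + G̃L̃)/(2(ẼG̃ − F̃²)). -/
def Hm (f ν h ν₁ : ℝ × ℝ → R3) (p : ℝ × ℝ) : ℝ :=
  (Et f p * Nt1 h ν₁ p - 2 * Ft f h p * Mt h ν p + Gt h p * Lt f ν p) /
    (2 * (Et f p * Gt h p - Ft f h p ^ 2))

/-- The principal curvature κ = H + ε√(H² − K); `ε = 1` gives κ₁ and `ε = -1` gives κ₂. -/
def kap (f ν h ν₁ : ℝ × ℝ → R3) (ε : ℝ) (p : ℝ × ℝ) : ℝ :=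
  Hm f ν h ν₁ p + ε * Real.sqrt (Hm f ν h ν₁ p ^ 2 - Kg f ν h ν₁ p)

/-- First component of the principal vector field V = −v(M̃ − κF̃)∂_u + (L̃ − κẼ)∂_v. -/
def V1c (f ν h ν₁ : ℝ × ℝ → R3) (ε : ℝ) (p : ℝ × ℝ) : ℝ :=
  -(p.2 * (Mt h ν p - kap f ν h ν₁ ε p * Ft f h p))

/-- Second component of the principal vector field V = −v(M̃ − κF̃)∂_u + (L̃ − κẼ)∂_v. -/
def V2c (f ν h ν₁ : ℝ × ℝ → R3) (ε : ℝ) (p : ℝ × ℝ) : ℝ :=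
  Lt f ν p - kap f ν h ν₁ ε p * Et f p

/-- Directional derivative of `g` along the principal vector field V. -/
def VD (f ν h ν₁ : ℝ × ℝ → R3) (ε : ℝ) {E : Type*} [NormedAddCommGroup E] [NormedSpace ℝ E]
    (g : ℝ × ℝ → E) (p : ℝ × ℝ) : E :=
  V1c f ν h ν₁ ε p • pu g p + V2c f ν h ν₁ ε p • pv g p

/-- The radius of principal curvature ρ = 1/κ. -/
def rho (f ν h ν₁ : ℝ × ℝ → R3) (ε : ℝ) (p : ℝ × ℝ) : ℝ := (kap f ν h ν₁ ε p)⁻¹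

/-- The focal surface C = f + ρ·ν. -/
def Cf (f ν h ν₁ : ℝ × ℝ → R3) (ε : ℝ) (p : ℝ × ℝ) : R3 :=
  f p + rho f ν h ν₁ ε p • ν p

/-- The normal direction x = −(M̃ − κF̃)·f_u + (L̃ − κẼ)·h of the focal surface. -/
def xj (f ν h ν₁ : ℝ × ℝ → R3) (ε : ℝ) (p : ℝ × ℝ) : R3 :=
  (-(Mt h ν p - kap f ν h ν₁ ε p * Ft f h p)) • pu f p +
    (Lt f ν p - kap f ν h ν₁ ε p * Et f p) • h p

/-- The unit normal e = x/‖x‖ of the focal surface. -/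
def ej (f ν h ν₁ : ℝ × ℝ → R3) (ε : ℝ) (p : ℝ × ℝ) : R3 :=
  (norm3 (xj f ν h ν₁ ε p))⁻¹ • xj f ν h ν₁ ε p

/-- The limiting normal curvature κ_ν(u) = L̃(u,0). -/
def kν (f ν : ℝ × ℝ → R3) (u : ℝ) : ℝ := Lt f ν (u, 0)

/-- The cuspidal torsion κ_t(u) = M̃(u,0). -/
def kt (h ν : ℝ × ℝ → R3) (u : ℝ) : ℝ := Mt h ν (u, 0)

/-- The bias r_b(u) = 3Ñ₁(u,0). -/
def rb (h ν₁ : ℝ × ℝ → R3) (u : ℝ) : ℝ := 3 * Nt1 h ν₁ (u, 0)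

/-- The secondary cuspidal curvature r_c(u) = 24((Ñ₁)_v − 2F̃_vM̃ − G̃_vÑ₁)(u,0). -/
def rc (f ν h ν₁ : ℝ × ℝ → R3) (u : ℝ) : ℝ :=
  24 * (pv (Nt1 h ν₁) (u, 0) - 2 * pv (Ft f h) (u, 0) * Mt h ν (u, 0) -
    pv (Gt h) (u, 0) * Nt1 h ν₁ (u, 0))

/-- The singular curvature κ_s(u) = ⟨f_uu, h⟩(u,0). -/
def ks (f h : ℝ × ℝ → R3) (u : ℝ) : ℝ := dot3 (pu (pu f) (u, 0)) (h (u, 0))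

/-- The rank of the differential of `F` at `p`. -/
def rankAt (F : ℝ × ℝ → R3) (p : ℝ × ℝ) : ℕ :=
  Module.finrank ℝ (LinearMap.range (fderiv ℝ F p).toLinearMap)

/-!
Write `ℓ = L̃ - κẼ`, `m = M̃ - κF̃`, `n = Ñ₁ - κG̃`. That `κ` is a principal curvature means
`ℓ n = m²`. Along `v = 0` the relations `f_v = v h` and `ν_v = v ν₁` give `Ẽ_v = L̃_v = 0`, and
expanding in the orthonormal frame gives `M̃_v = L̃ F̃_v + M̃ G̃_v / 2`, so the `v`-derivative of
`ℓ n = m²` reads `(ℓ + n) κ_v = ℓ r_c / 24` with `ℓ + n = 2 (H - κ) ≠ 0`. There `V = ℓ ∂_v`, hence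
`Vκ = ℓ² r_c / (48 (H - κ))`, while `κ_t ≠ 0` forces `ℓ ≠ 0` because `ℓ n = κ_t²`. At a ridge point
`r_c` therefore vanishes, `(Vκ)_u` is a nonzero multiple of `r_c'`, `(Vκ)_v` is a nonzero multiple
of `VVκ`, and `Vρ = -κ⁻² Vκ` transfers the gradient from `Vκ` to `Vρ`.
-/

open scoped ContDiff Topology Matrix

section PartialDerivatives

variable {E : Type*} [NormedAddCommGroup E] [NormedSpace ℝ E] {g : ℝ × ℝ → E} {p : ℝ × ℝ}
  {m n : WithTop ℕ∞}

lemma contDiffAt_pu (hg : ContDiffAt ℝ n g p) (hmn : m + 1 ≤ n) : ContDiffAt ℝ m (pu g) p :=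
  (hg.fderiv_right hmn).clm_apply contDiffAt_const

lemma contDiffAt_pv (hg : ContDiffAt ℝ n g p) (hmn : m + 1 ≤ n) : ContDiffAt ℝ m (pv g) p :=
  (hg.fderiv_right hmn).clm_apply contDiffAt_const

lemma hasDerivAt_pu {u v : ℝ} (hg : DifferentiableAt ℝ g (u, v)) :
    HasDerivAt (fun t => g (t, v)) (pu g (u, v)) u :=
  hg.hasFDerivAt.comp_hasDerivAt u ((hasDerivAt_id u).prodMk (hasDerivAt_const u v))

lemma hasDerivAt_pv {u v : ℝ} (hg : DifferentiableAt ℝ g (u, v)) :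
    HasDerivAt (fun t => g (u, t)) (pv g (u, v)) v :=
  hg.hasFDerivAt.comp_hasDerivAt v ((hasDerivAt_const v u).prodMk (hasDerivAt_id v))

lemma pv_fun_neg (g : ℝ × ℝ → E) (p : ℝ × ℝ) : pv (fun q => -g q) p = -pv g p := by
  simp [pv]

lemma pv_pu_comm (hg : ContDiffAt ℝ 2 g p) : pv (pu g) p = pu (pv g) p := by
  have hg' : DifferentiableAt ℝ (fderiv ℝ g) p :=
    (hg.fderiv_right (m := 1) one_add_one_eq_two.le).differentiableAt one_ne_zero
  have fderiv_apply (w : ℝ × ℝ) :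
      fderiv ℝ (fun q => fderiv ℝ g q w) p = (fderiv ℝ (fderiv ℝ g) p).flip w := by
    rw [fderiv_clm_apply hg' (differentiableAt_const w)]
    simp
  change fderiv ℝ (fun q => fderiv ℝ g q (1, 0)) p (0, 1) =
    fderiv ℝ (fun q => fderiv ℝ g q (0, 1)) p (1, 0)
  rw [fderiv_apply, fderiv_apply]
  exact hg.isSymmSndFDerivAt (by simp) (0, 1) (1, 0)

lemma pv_pu_eq_zero_of_pv_eq_zero {u v : ℝ} (hg : ContDiffAt ℝ 2 g (u, v))
    (hgv : ∀ t, pv g (t, v) = 0) : pv (pu g) (u, v) = 0 := by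
  have hpv : DifferentiableAt ℝ (pv g) (u, v) :=
    (contDiffAt_pv (m := 1) hg one_add_one_eq_two.le).differentiableAt one_ne_zero
  have hderiv := hasDerivAt_pu hpv
  simp only [hgv] at hderiv
  rw [pv_pu_comm hg, hderiv.unique (hasDerivAt_const u 0)]

end PartialDerivatives

section InnerProduct

lemma dot3_eq_dotProduct (a b : R3) : dot3 a b = a ⬝ᵥ b := by
  simp [dot3, dotProduct, Fin.sum_univ_three]

lemma dot3_comm (a b : R3) : dot3 a b = dot3 b a := by
  simp only [dot3_eq_dotProduct, dotProduct_comm]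

lemma zero_dot3 (a : R3) : dot3 0 a = 0 := by
  simp [dot3]

lemma dot3_zero (a : R3) : dot3 a 0 = 0 := by
  simp [dot3]

lemma dotProduct_eq_sum_of_orthonormal {ι R : Type*} [Fintype ι] [DecidableEq ι] [CommRing R]
    {e : ι → ι → R} (he : ∀ i j, e i ⬝ᵥ e j = if i = j then 1 else 0) (x y : ι → R) :
    x ⬝ᵥ y = ∑ i, (x ⬝ᵥ e i) * (e i ⬝ᵥ y) := by
  have hrows : Matrix.of e * (Matrix.of e)ᵀ = 1 := by
    ext i j
    simpa [Matrix.mul_apply, Matrix.one_apply, dotProduct] using he i j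
  calc x ⬝ᵥ y = x ⬝ᵥ ((Matrix.of e)ᵀ * Matrix.of e) *ᵥ y := by
        rw [mul_eq_one_comm.mp hrows, Matrix.one_mulVec]
    _ = (x ᵥ* (Matrix.of e)ᵀ) ⬝ᵥ (Matrix.of e *ᵥ y) := by
        rw [← Matrix.mulVec_mulVec, Matrix.dotProduct_mulVec]
    _ = ∑ i, (x ⬝ᵥ e i) * (e i ⬝ᵥ y) := rfl

lemma dot3_eq_add_of_orthonormal {a b c : R3} (haa : dot3 a a = 1) (hbb : dot3 b b = 1)
    (hcc : dot3 c c = 1) (hab : dot3 a b = 0) (hac : dot3 a c = 0) (hbc : dot3 b c = 0)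
    (x y : R3) :
    dot3 x y = dot3 x a * dot3 a y + dot3 x b * dot3 b y + dot3 x c * dot3 c y := by
  have orthonormal : ∀ i j, ![a, b, c] i ⬝ᵥ ![a, b, c] j = if i = j then 1 else 0 := by
    simp only [dot3_eq_dotProduct] at haa hbb hcc hab hac hbc
    intro i j
    fin_cases i <;> fin_cases j <;>
      simp [haa, hbb, hcc, hab, hac, hbc, dotProduct_comm b a, dotProduct_comm c]
  simpa [dot3_eq_dotProduct, Fin.sum_univ_three] using
    dotProduct_eq_sum_of_orthonormal orthonormal x y

lemma gram_det_ne_zero {a b : R3} (hab : LinearIndependent ℝ ![a, b]) :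
    dot3 a a * dot3 b b - dot3 a b ^ 2 ≠ 0 := by
  have lagrange : crossProduct a b ⬝ᵥ crossProduct a b = dot3 a a * dot3 b b - dot3 a b ^ 2 := by
    rw [cross_dot_cross, dotProduct_comm b a, sq]
    simp only [dot3_eq_dotProduct]
  rw [← lagrange, Ne, dotProduct_self_eq_zero]
  exact crossProduct_ne_zero_iff_linearIndependent.mpr hab

variable {E : Type*} [NormedAddCommGroup E] [NormedSpace ℝ E] {a b : E → R3} {x : E}

lemma contDiffAt_dot3 {n : WithTop ℕ∞} (ha : ContDiffAt ℝ n a x) (hb : ContDiffAt ℝ n b x) :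
    ContDiffAt ℝ n (fun y => dot3 (a y) (b y)) x := by
  rw [contDiffAt_pi] at ha hb
  exact (((ha 0).mul (hb 0)).add ((ha 1).mul (hb 1))).add ((ha 2).mul (hb 2))

lemma fderiv_dot3 (ha : DifferentiableAt ℝ a x) (hb : DifferentiableAt ℝ b x) (w : E) :
    fderiv ℝ (fun y => dot3 (a y) (b y)) x w =
      dot3 (fderiv ℝ a x w) (b x) + dot3 (a x) (fderiv ℝ b x w) := by
  have ha' := hasFDerivAt_pi'.mp ha.hasFDerivAt
  have hb' := hasFDerivAt_pi'.mp hb.hasFDerivAt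
  have hsum := (((ha' 0).mul (hb' 0)).add ((ha' 1).mul (hb' 1))).add ((ha' 2).mul (hb' 2))
  rw [HasFDerivAt.fderiv (f := fun y => dot3 (a y) (b y)) hsum]
  simp [dot3]
  ring

lemma pv_dot3 {a b : ℝ × ℝ → R3} {p : ℝ × ℝ} (ha : DifferentiableAt ℝ a p)
    (hb : DifferentiableAt ℝ b p) :
    pv (fun q => dot3 (a q) (b q)) p = dot3 (pv a p) (b p) + dot3 (a p) (pv b p) :=
  fderiv_dot3 ha hb (0, 1)

lemma dot3_fderiv_eq_zero_of_unit (ha : DifferentiableAt ℝ a x) (hunit : ∀ y, dot3 (a y) (a y) = 1)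
    (w : E) : dot3 (a x) (fderiv ℝ a x w) = 0 := by
  have hderiv := fderiv_dot3 ha ha w
  simp only [hunit, fderiv_fun_const, Pi.zero_apply, zero_apply,
    dot3_comm (fderiv ℝ a x w)] at hderiv
  linarith

end InnerProduct

section PrincipalCurvature

variable {f ν h ν₁ : ℝ × ℝ → R3} {ε : ℝ} {p : ℝ × ℝ}

local notation "κ" => kap f ν h ν₁ ε
local notation "𝒱" => VD f ν h ν₁ ε

lemma kap_sq_sub_two_mul_Hm_mul_kap_add_Kg (hε : ε = 1 ∨ ε = -1)
    (hp : 0 ≤ Hm f ν h ν₁ p ^ 2 - Kg f ν h ν₁ p) :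
    κ p ^ 2 - 2 * Hm f ν h ν₁ p * κ p + Kg f ν h ν₁ p = 0 := by
  have hε_sq : ε ^ 2 = 1 := sq_eq_one_iff.mpr hε
  unfold kap
  linear_combination
    ε ^ 2 * Real.sq_sqrt hp + (Hm f ν h ν₁ p ^ 2 - Kg f ν h ν₁ p) * hε_sq

lemma Hm_sub_kap_ne_zero (hε : ε ≠ 0) (hp : 0 < Hm f ν h ν₁ p ^ 2 - Kg f ν h ν₁ p) :
    Hm f ν h ν₁ p - κ p ≠ 0 := by
  rw [kap, sub_add_cancel_left, neg_ne_zero]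
  exact mul_ne_zero hε (Real.sqrt_pos.mpr hp).ne'

lemma VD_axis {E : Type*} [NormedAddCommGroup E] [NormedSpace ℝ E] (g : ℝ × ℝ → E) (u : ℝ) :
    𝒱 g (u, 0) = V2c f ν h ν₁ ε (u, 0) • pv g (u, 0) := by
  simp [VD, V1c]

lemma VD_inv {g : ℝ × ℝ → ℝ} (hg : DifferentiableAt ℝ g p) (hgp : g p ≠ 0) :
    𝒱 (fun q => (g q)⁻¹) p = -(g p ^ 2)⁻¹ * 𝒱 g p := by
  have fderiv_inv : fderiv ℝ (fun q => (g q)⁻¹) p = -(g p ^ 2)⁻¹ • fderiv ℝ g p :=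
    ((hasDerivAt_inv hgp).comp_hasFDerivAt p hg.hasFDerivAt).fderiv
  simp only [VD, pu, pv, fderiv_inv, smul_eq_mul, smul_apply]
  ring

namespace AdaptedPureFrontal

section Smoothness

lemma differentiableAt_pu_f (H : AdaptedPureFrontal f ν h ν₁) : DifferentiableAt ℝ (pu f) p :=
  (contDiffAt_pu (m := ∞) H.smooth_f.contDiffAt le_rfl).differentiableAt (by simp)

lemma differentiableAt_pu_ν (H : AdaptedPureFrontal f ν h ν₁) : DifferentiableAt ℝ (pu ν) p :=
  (contDiffAt_pu (m := ∞) H.smooth_ν.contDiffAt le_rfl).differentiableAt (by simp)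

lemma differentiableAt_h (H : AdaptedPureFrontal f ν h ν₁) : DifferentiableAt ℝ h p :=
  H.smooth_h.differentiable (by simp) p

lemma contDiffAt_Et (H : AdaptedPureFrontal f ν h ν₁) : ContDiffAt ℝ ∞ (Et f) p :=
  contDiffAt_dot3 (contDiffAt_pu H.smooth_f.contDiffAt le_rfl)
    (contDiffAt_pu H.smooth_f.contDiffAt le_rfl)

lemma contDiffAt_Ft (H : AdaptedPureFrontal f ν h ν₁) : ContDiffAt ℝ ∞ (Ft f h) p :=
  contDiffAt_dot3 (contDiffAt_pu H.smooth_f.contDiffAt le_rfl) H.smooth_h.contDiffAt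

lemma contDiffAt_Gt (H : AdaptedPureFrontal f ν h ν₁) : ContDiffAt ℝ ∞ (Gt h) p :=
  contDiffAt_dot3 H.smooth_h.contDiffAt H.smooth_h.contDiffAt

lemma contDiffAt_Lt (H : AdaptedPureFrontal f ν h ν₁) : ContDiffAt ℝ ∞ (Lt f ν) p :=
  (contDiffAt_dot3 (contDiffAt_pu H.smooth_f.contDiffAt le_rfl)
    (contDiffAt_pu H.smooth_ν.contDiffAt le_rfl)).neg

lemma contDiffAt_Mt (H : AdaptedPureFrontal f ν h ν₁) : ContDiffAt ℝ ∞ (Mt h ν) p :=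
  (contDiffAt_dot3 H.smooth_h.contDiffAt (contDiffAt_pu H.smooth_ν.contDiffAt le_rfl)).neg

lemma contDiffAt_Nt1 (H : AdaptedPureFrontal f ν h ν₁) : ContDiffAt ℝ ∞ (Nt1 h ν₁) p :=
  (contDiffAt_dot3 H.smooth_h.contDiffAt H.smooth_ν₁.contDiffAt).neg

lemma Et_mul_Gt_sub_Ft_sq_ne_zero (H : AdaptedPureFrontal f ν h ν₁) (p : ℝ × ℝ) :
    Et f p * Gt h p - Ft f h p ^ 2 ≠ 0 := by
  have hfh : LinearIndependent ℝ ![pu f p, h p] := by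
    convert (H.indep p).comp (Fin.castSucc : Fin 2 → Fin 3) (Fin.castSucc_injective 2) using 1
    ext i
    fin_cases i <;> rfl
  exact gram_det_ne_zero hfh

lemma contDiffAt_Et_mul_Gt_sub_Ft_sq (H : AdaptedPureFrontal f ν h ν₁) :
    ContDiffAt ℝ ∞ (fun q => Et f q * Gt h q - Ft f h q ^ 2) p :=
  (H.contDiffAt_Et.mul H.contDiffAt_Gt).sub (H.contDiffAt_Ft.pow 2)

lemma contDiffAt_Kg (H : AdaptedPureFrontal f ν h ν₁) : ContDiffAt ℝ ∞ (Kg f ν h ν₁) p :=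
  ((H.contDiffAt_Lt.mul H.contDiffAt_Nt1).sub (H.contDiffAt_Mt.pow 2)).div
    H.contDiffAt_Et_mul_Gt_sub_Ft_sq (H.Et_mul_Gt_sub_Ft_sq_ne_zero p)

lemma contDiffAt_Hm (H : AdaptedPureFrontal f ν h ν₁) : ContDiffAt ℝ ∞ (Hm f ν h ν₁) p :=
  (((H.contDiffAt_Et.mul H.contDiffAt_Nt1).sub
    ((contDiffAt_const.mul H.contDiffAt_Ft).mul H.contDiffAt_Mt)).add
      (H.contDiffAt_Gt.mul H.contDiffAt_Lt)).div
    (contDiffAt_const.mul H.contDiffAt_Et_mul_Gt_sub_Ft_sq)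
    (mul_ne_zero two_ne_zero (H.Et_mul_Gt_sub_Ft_sq_ne_zero p))

lemma contDiffAt_kap (H : AdaptedPureFrontal f ν h ν₁)
    (hp : 0 < Hm f ν h ν₁ p ^ 2 - Kg f ν h ν₁ p) : ContDiffAt ℝ ∞ κ p :=
  H.contDiffAt_Hm.add
    (contDiffAt_const.mul (((H.contDiffAt_Hm.pow 2).sub H.contDiffAt_Kg).sqrt hp.ne'))

lemma contDiffAt_V1c (H : AdaptedPureFrontal f ν h ν₁)
    (hp : 0 < Hm f ν h ν₁ p ^ 2 - Kg f ν h ν₁ p) : ContDiffAt ℝ ∞ (V1c f ν h ν₁ ε) p :=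
  (contDiffAt_snd.mul
    (H.contDiffAt_Mt.sub ((H.contDiffAt_kap hp).mul H.contDiffAt_Ft))).neg

lemma contDiffAt_V2c (H : AdaptedPureFrontal f ν h ν₁)
    (hp : 0 < Hm f ν h ν₁ p ^ 2 - Kg f ν h ν₁ p) : ContDiffAt ℝ ∞ (V2c f ν h ν₁ ε) p :=
  H.contDiffAt_Lt.sub ((H.contDiffAt_kap hp).mul H.contDiffAt_Et)

lemma contDiffAt_VD (H : AdaptedPureFrontal f ν h ν₁) {E : Type*} [NormedAddCommGroup E]
    [NormedSpace ℝ E] {g : ℝ × ℝ → E} (hp : 0 < Hm f ν h ν₁ p ^ 2 - Kg f ν h ν₁ p)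
    (hg : ContDiffAt ℝ ∞ g p) : ContDiffAt ℝ ∞ (𝒱 g) p :=
  ((H.contDiffAt_V1c hp).smul (contDiffAt_pu hg le_rfl)).add
    ((H.contDiffAt_V2c hp).smul (contDiffAt_pv hg le_rfl))

lemma eventually_Hm_sq_sub_Kg_pos (H : AdaptedPureFrontal f ν h ν₁)
    (hp : 0 < Hm f ν h ν₁ p ^ 2 - Kg f ν h ν₁ p) :
    ∀ᶠ q in 𝓝 p, 0 < Hm f ν h ν₁ q ^ 2 - Kg f ν h ν₁ q :=
  ((H.contDiffAt_Hm.continuousAt.pow 2).sub H.contDiffAt_Kg.continuousAt).eventually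
    (lt_mem_nhds hp)

lemma differentiable_rc (H : AdaptedPureFrontal f ν h ν₁) : Differentiable ℝ (rc f ν h ν₁) := by
  have haxis {g : ℝ × ℝ → ℝ} (hg : ∀ q, ContDiffAt ℝ ∞ g q) :
      Differentiable ℝ fun u : ℝ => g (u, 0) := fun u =>
    (hasDerivAt_pu ((hg (u, 0)).differentiableAt (by simp))).differentiableAt
  have hF := haxis fun q => contDiffAt_pv (p := q) H.contDiffAt_Ft le_rfl
  have hG := haxis fun q => contDiffAt_pv (p := q) H.contDiffAt_Gt le_rfl
  have hN := haxis fun q => contDiffAt_pv (p := q) H.contDiffAt_Nt1 le_rfl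
  exact ((hN.sub ((hF.const_mul 2).mul (haxis fun _ => H.contDiffAt_Mt))).sub
    (hG.mul (haxis fun _ => H.contDiffAt_Nt1))).const_mul 24

end Smoothness

section SingularCurve

lemma Et_axis (H : AdaptedPureFrontal f ν h ν₁) (u : ℝ) : Et f (u, 0) = 1 :=
  H.adapted_fu u

lemma Ft_axis (H : AdaptedPureFrontal f ν h ν₁) (u : ℝ) : Ft f h (u, 0) = 0 :=
  H.adapted_fu_h u

lemma Gt_axis (H : AdaptedPureFrontal f ν h ν₁) (u : ℝ) : Gt h (u, 0) = 1 :=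
  H.adapted_h u

lemma Hm_axis (H : AdaptedPureFrontal f ν h ν₁) (u : ℝ) :
    Hm f ν h ν₁ (u, 0) = (Lt f ν (u, 0) + Nt1 h ν₁ (u, 0)) / 2 := by
  simp only [Hm, H.Et_axis, H.Ft_axis, H.Gt_axis]
  ring

lemma pv_pu_f_axis (H : AdaptedPureFrontal f ν h ν₁) (u : ℝ) : pv (pu f) (u, 0) = 0 :=
  pv_pu_eq_zero_of_pv_eq_zero (contDiff_infty.mp H.smooth_f 2).contDiffAt fun t => by simp [H.fv_eq]

lemma pv_pu_ν_axis (H : AdaptedPureFrontal f ν h ν₁) (u : ℝ) : pv (pu ν) (u, 0) = 0 :=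
  pv_pu_eq_zero_of_pv_eq_zero (contDiff_infty.mp H.smooth_ν 2).contDiffAt fun t => by simp [H.νv_eq]

lemma pv_Et_axis (H : AdaptedPureFrontal f ν h ν₁) (u : ℝ) : pv (Et f) (u, 0) = 0 := by
  calc pv (Et f) (u, 0)
      = dot3 (pv (pu f) (u, 0)) (pu f (u, 0)) + dot3 (pu f (u, 0)) (pv (pu f) (u, 0)) :=
        pv_dot3 H.differentiableAt_pu_f H.differentiableAt_pu_f
    _ = 0 := by rw [H.pv_pu_f_axis, zero_dot3, dot3_zero, add_zero]

lemma pv_Ft_axis (H : AdaptedPureFrontal f ν h ν₁) (u : ℝ) :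
    pv (Ft f h) (u, 0) = dot3 (pu f (u, 0)) (pv h (u, 0)) := by
  calc pv (Ft f h) (u, 0)
      = dot3 (pv (pu f) (u, 0)) (h (u, 0)) + dot3 (pu f (u, 0)) (pv h (u, 0)) :=
        pv_dot3 H.differentiableAt_pu_f H.differentiableAt_h
    _ = dot3 (pu f (u, 0)) (pv h (u, 0)) := by rw [H.pv_pu_f_axis, zero_dot3, zero_add]

lemma pv_Gt (H : AdaptedPureFrontal f ν h ν₁) (p : ℝ × ℝ) :
    pv (Gt h) p = 2 * dot3 (h p) (pv h p) := by
  calc pv (Gt h) p = dot3 (pv h p) (h p) + dot3 (h p) (pv h p) :=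
        pv_dot3 H.differentiableAt_h H.differentiableAt_h
    _ = 2 * dot3 (h p) (pv h p) := by rw [dot3_comm (pv h p), two_mul]

lemma pv_Lt_axis (H : AdaptedPureFrontal f ν h ν₁) (u : ℝ) : pv (Lt f ν) (u, 0) = 0 := by
  calc pv (Lt f ν) (u, 0) = -pv (fun p => dot3 (pu f p) (pu ν p)) (u, 0) :=
        pv_fun_neg _ _
    _ = 0 := by
        rw [pv_dot3 H.differentiableAt_pu_f H.differentiableAt_pu_ν, H.pv_pu_f_axis,
          H.pv_pu_ν_axis, zero_dot3, dot3_zero, add_zero, neg_zero]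

lemma pv_Mt_axis (H : AdaptedPureFrontal f ν h ν₁) (u : ℝ) :
    pv (Mt h ν) (u, 0) =
      Lt f ν (u, 0) * pv (Ft f h) (u, 0) + Mt h ν (u, 0) * pv (Gt h) (u, 0) / 2 := by
  have hν : dot3 (ν (u, 0)) (pu ν (u, 0)) = 0 :=
    dot3_fderiv_eq_zero_of_unit (H.smooth_ν.differentiable (by simp) (u, 0)) H.unit_ν (1, 0)
  have frame_expansion := dot3_eq_add_of_orthonormal (H.adapted_fu u) (H.adapted_h u)
    (H.unit_ν (u, 0)) (H.adapted_fu_h u) (H.orth_fu_ν (u, 0)) (H.adapted_h_ν u)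
    (pv h (u, 0)) (pu ν (u, 0))
  calc pv (Mt h ν) (u, 0) = -pv (fun p => dot3 (h p) (pu ν p)) (u, 0) :=
        pv_fun_neg _ _
    _ = -dot3 (pv h (u, 0)) (pu ν (u, 0)) := by
        rw [pv_dot3 H.differentiableAt_h H.differentiableAt_pu_ν, H.pv_pu_ν_axis, dot3_zero,
          add_zero]
    _ = Lt f ν (u, 0) * pv (Ft f h) (u, 0) + Mt h ν (u, 0) * pv (Gt h) (u, 0) / 2 := by
        rw [frame_expansion, hν, H.pv_Ft_axis, H.pv_Gt, dot3_comm (pv h (u, 0)) (pu f (u, 0)),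
          dot3_comm (pv h (u, 0)) (h (u, 0)), Lt, Mt]
        ring

-- `det (II - κ I) = 0` in the frame `f_u, h`, whose first entry `L̃ - κẼ` is `V2c`.
lemma V2c_mul_Nt1_sub_eq_sq (H : AdaptedPureFrontal f ν h ν₁) (hε : ε = 1 ∨ ε = -1)
    (hp : 0 ≤ Hm f ν h ν₁ p ^ 2 - Kg f ν h ν₁ p) :
    V2c f ν h ν₁ ε p * (Nt1 h ν₁ p - κ p * Gt h p) = (Mt h ν p - κ p * Ft f h p) ^ 2 := by
  have hD := H.Et_mul_Gt_sub_Ft_sq_ne_zero p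
  have hH : 2 * Hm f ν h ν₁ p * (Et f p * Gt h p - Ft f h p ^ 2) =
      Et f p * Nt1 h ν₁ p - 2 * Ft f h p * Mt h ν p + Gt h p * Lt f ν p := by
    rw [Hm]
    field_simp
  have hK : Kg f ν h ν₁ p * (Et f p * Gt h p - Ft f h p ^ 2) =
      Lt f ν p * Nt1 h ν₁ p - Mt h ν p ^ 2 := div_mul_cancel₀ _ hD
  rw [V2c]
  linear_combination (Et f p * Gt h p - Ft f h p ^ 2) *
    kap_sq_sub_two_mul_Hm_mul_kap_add_Kg hε hp + κ p * hH - hK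

lemma V2c_axis_ne_zero_of_kt_ne_zero (H : AdaptedPureFrontal f ν h ν₁) (hε : ε = 1 ∨ ε = -1)
    {u : ℝ} (hu : 0 ≤ Hm f ν h ν₁ (u, 0) ^ 2 - Kg f ν h ν₁ (u, 0)) (hkt : kt h ν u ≠ 0) :
    V2c f ν h ν₁ ε (u, 0) ≠ 0 := by
  intro hV
  have hprincipal := H.V2c_mul_Nt1_sub_eq_sq hε hu
  rw [hV, zero_mul, H.Ft_axis, mul_zero, sub_zero] at hprincipal
  exact hkt (pow_eq_zero_iff two_ne_zero |>.mp hprincipal.symm)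

lemma Hm_sub_kap_mul_pv_kap_axis (H : AdaptedPureFrontal f ν h ν₁) (hε : ε = 1 ∨ ε = -1) {u : ℝ}
    (hu : 0 < Hm f ν h ν₁ (u, 0) ^ 2 - Kg f ν h ν₁ (u, 0)) :
    48 * (Hm f ν h ν₁ (u, 0) - κ (u, 0)) * pv κ (u, 0) = V2c f ν h ν₁ ε (u, 0) * rc f ν h ν₁ u := by
  have hasDerivAt_v {g : ℝ × ℝ → ℝ} (hg : ContDiffAt ℝ ∞ g (u, 0)) :
      HasDerivAt (fun v => g (u, v)) (pv g (u, 0)) 0 :=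
    hasDerivAt_pv (hg.differentiableAt (by simp))
  have hκ := hasDerivAt_v (H.contDiffAt_kap (ε := ε) hu)
  have hleft := ((hasDerivAt_v H.contDiffAt_Lt).sub (hκ.mul (hasDerivAt_v H.contDiffAt_Et))).mul
    ((hasDerivAt_v H.contDiffAt_Nt1).sub (hκ.mul (hasDerivAt_v H.contDiffAt_Gt)))
  have hright := ((hasDerivAt_v H.contDiffAt_Mt).sub
    (hκ.mul (hasDerivAt_v H.contDiffAt_Ft))).pow 2
  have hprincipal : ∀ᶠ v in 𝓝 (0 : ℝ), V2c f ν h ν₁ ε (u, v) *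
      (Nt1 h ν₁ (u, v) - κ (u, v) * Gt h (u, v)) = (Mt h ν (u, v) - κ (u, v) * Ft f h (u, v)) ^ 2 :=
    ((Continuous.prodMk_right u).tendsto 0).eventually
      ((H.eventually_Hm_sq_sub_Kg_pos hu).mono fun _ hq => H.V2c_mul_Nt1_sub_eq_sq hε hq.le)
  have hderiv := hleft.unique (hright.congr_of_eventuallyEq hprincipal)
  have haxis := hprincipal.self_of_nhds
  simp only [V2c, Pi.mul_apply, Pi.sub_apply, H.Et_axis, H.Ft_axis, H.Gt_axis, H.pv_Et_axis,
    H.pv_Lt_axis, H.pv_Mt_axis] at hderiv haxis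
  simp only [V2c, rc, H.Hm_axis, H.Et_axis]
  linear_combination -24 * hderiv + 24 * pv (Gt h) (u, 0) * haxis

lemma VD_kap_axis (H : AdaptedPureFrontal f ν h ν₁) (hε : ε = 1 ∨ ε = -1) {u : ℝ}
    (hu : 0 < Hm f ν h ν₁ (u, 0) ^ 2 - Kg f ν h ν₁ (u, 0)) :
    𝒱 κ (u, 0) = V2c f ν h ν₁ ε (u, 0) ^ 2 / (48 * (Hm f ν h ν₁ (u, 0) - κ (u, 0))) *
      rc f ν h ν₁ u := by
  have hgap : Hm f ν h ν₁ (u, 0) - κ (u, 0) ≠ 0 :=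
    Hm_sub_kap_ne_zero (by grind) hu
  rw [VD_axis, smul_eq_mul, div_mul_eq_mul_div, eq_div_iff (by positivity)]
  linear_combination V2c f ν h ν₁ ε (u, 0) * H.Hm_sub_kap_mul_pv_kap_axis hε hu

end SingularCurve

section Ridge

lemma pu_VD_kap_axis_of_rc_eq_zero (H : AdaptedPureFrontal f ν h ν₁) (hε : ε = 1 ∨ ε = -1)
    {u : ℝ} (hu : 0 < Hm f ν h ν₁ (u, 0) ^ 2 - Kg f ν h ν₁ (u, 0)) (hrc : rc f ν h ν₁ u = 0) :
    pu (𝒱 κ) (u, 0) = V2c f ν h ν₁ ε (u, 0) ^ 2 / (48 * (Hm f ν h ν₁ (u, 0) - κ (u, 0))) *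
      deriv (rc f ν h ν₁) u := by
  have hgap := Hm_sub_kap_ne_zero (by grind : ε ≠ 0) hu
  have differentiableAt_axis {g : ℝ × ℝ → ℝ} (hg : ContDiffAt ℝ ∞ g (u, 0)) :
      DifferentiableAt ℝ (fun t => g (t, 0)) u :=
    (hasDerivAt_pu (hg.differentiableAt (by simp))).differentiableAt
  have hcoeff : DifferentiableAt ℝ
      (fun t => V2c f ν h ν₁ ε (t, 0) ^ 2 / (48 * (Hm f ν h ν₁ (t, 0) - κ (t, 0)))) u :=
    ((differentiableAt_axis (H.contDiffAt_V2c hu)).pow 2).div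
      (((differentiableAt_axis H.contDiffAt_Hm).sub
        (differentiableAt_axis (H.contDiffAt_kap hu))).const_mul 48) (by positivity)
  have hVκ : (fun t => 𝒱 κ (t, 0)) =ᶠ[𝓝 u] fun t =>
      V2c f ν h ν₁ ε (t, 0) ^ 2 / (48 * (Hm f ν h ν₁ (t, 0) - κ (t, 0))) * rc f ν h ν₁ t :=
    ((Continuous.prodMk_left 0).tendsto u).eventually (H.eventually_Hm_sq_sub_Kg_pos hu) |>.mono
      fun _ ht => H.VD_kap_axis hε ht
  have hpu : HasDerivAt (fun t => 𝒱 κ (t, 0)) (pu (𝒱 κ) (u, 0)) u :=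
    hasDerivAt_pu ((H.contDiffAt_VD hu (H.contDiffAt_kap hu)).differentiableAt (by simp))
  rw [← hpu.deriv, hVκ.deriv_eq, deriv_fun_mul hcoeff (H.differentiable_rc u), hrc, mul_zero,
    zero_add]

lemma fderiv_VD_rho_of_ridge (H : AdaptedPureFrontal f ν h ν₁)
    (hp : 0 < Hm f ν h ν₁ p ^ 2 - Kg f ν h ν₁ p) (hκ : κ p ≠ 0) (hridge : 𝒱 κ p = 0) :
    fderiv ℝ (𝒱 (rho f ν h ν₁ ε)) p = -(κ p ^ 2)⁻¹ • fderiv ℝ (𝒱 κ) p := by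
  have hκ_diff : DifferentiableAt ℝ κ p := (H.contDiffAt_kap hp).differentiableAt (by simp)
  have hVκ_diff : DifferentiableAt ℝ (𝒱 κ) p :=
    (H.contDiffAt_VD hp (H.contDiffAt_kap hp)).differentiableAt (by simp)
  have hVρ : 𝒱 (rho f ν h ν₁ ε) =ᶠ[𝓝 p] fun q => -(κ q ^ 2)⁻¹ * 𝒱 κ q := by
    filter_upwards [H.eventually_Hm_sq_sub_Kg_pos hp, hκ_diff.continuousAt.eventually_ne hκ]
      with q hq hκq
    exact VD_inv ((H.contDiffAt_kap hq).differentiableAt (by simp)) hκq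
  have hcoeff : DifferentiableAt ℝ (fun q => -(κ q ^ 2)⁻¹) p :=
    ((hκ_diff.pow 2).inv (pow_ne_zero 2 hκ)).neg
  rw [hVρ.fderiv_eq, fderiv_fun_mul hcoeff hVκ_diff, hridge, zero_smul, add_zero]

end Ridge

end AdaptedPureFrontal

theorem stmt_14_general (H : AdaptedPureFrontal f ν h ν₁) (hε : ε = 1 ∨ ε = -1)
    (hHK : 0 < Hm f ν h ν₁ 0 ^ 2 - Kg f ν h ν₁ 0) (hκ : κ 0 ≠ 0)
    (hV : V2c f ν h ν₁ ε 0 ≠ 0) (hridge : 𝒱 κ 0 = 0) :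
    (pu (𝒱 (rho f ν h ν₁ ε)) 0 ≠ 0 ∨ pv (𝒱 (rho f ν h ν₁ ε)) 0 ≠ 0) ↔
      (deriv (rc f ν h ν₁) 0 ≠ 0 ∨ 𝒱 (𝒱 κ) 0 ≠ 0) := by
  have hcoeff : V2c f ν h ν₁ ε 0 ^ 2 / (48 * (Hm f ν h ν₁ 0 - κ 0)) ≠ 0 := by
    have hgap := Hm_sub_kap_ne_zero (by grind : ε ≠ 0) hHK
    positivity
  have hrc : rc f ν h ν₁ 0 = 0 :=
    (mul_eq_zero.mp ((H.VD_kap_axis hε hHK).symm.trans hridge)).resolve_left hcoeff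
  have hpu : pu (𝒱 κ) 0 ≠ 0 ↔ deriv (rc f ν h ν₁) 0 ≠ 0 := by
    rw [← Prod.mk_zero_zero, H.pu_VD_kap_axis_of_rc_eq_zero hε hHK hrc]
    exact mul_ne_zero_iff_left hcoeff
  have hpv : pv (𝒱 κ) 0 ≠ 0 ↔ 𝒱 (𝒱 κ) 0 ≠ 0 := by
    rw [← Prod.mk_zero_zero, VD_axis _ 0]
    exact (smul_ne_zero_iff_right hV).symm
  have hρ (w : ℝ × ℝ) : fderiv ℝ (𝒱 (rho f ν h ν₁ ε)) 0 w ≠ 0 ↔ fderiv ℝ (𝒱 κ) 0 w ≠ 0 := by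
    simp [H.fderiv_VD_rho_of_ridge hHK hκ hridge, hκ]
  rw [pu, pv, hρ, hρ]
  exact or_congr hpu hpv

end PrincipalCurvature

/-- if κ_t(0) ≠ 0 and 0 is a V_j-ridge point, then 0 is a
non-degenerate singular point of C_j (the gradient of V_jρ_j at 0 is nonzero) iff
r_c'(0) ≠ 0 or 0 is a first order V_j-ridge point ((V_jV_jκ_j)(0) ≠ 0). -/
theorem stmt_14 (f ν h ν₁ : ℝ × ℝ → R3) (H : AdaptedPureFrontal f ν h ν₁)
    (ε : ℝ) (hε : ε = 1 ∨ ε = -1)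
    (hHK : ∀ p : ℝ × ℝ, Hm f ν h ν₁ p ^ 2 - Kg f ν h ν₁ p > 0)
    (hκ : ∀ p : ℝ × ℝ, kap f ν h ν₁ ε p ≠ 0)
    (hkt : kt h ν 0 ≠ 0)
    (hridge : VD f ν h ν₁ ε (kap f ν h ν₁ ε) 0 = 0) :
    (pu (VD f ν h ν₁ ε (rho f ν h ν₁ ε)) 0 ≠ 0 ∨
        pv (VD f ν h ν₁ ε (rho f ν h ν₁ ε)) 0 ≠ 0) ↔
      (deriv (rc f ν h ν₁) 0 ≠ 0 ∨
        VD f ν h ν₁ ε (VD f ν h ν₁ ε (kap f ν h ν₁ ε)) 0 ≠ 0) := by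
  exact stmt_14_general H hε (hHK 0) (hκ 0)
    (H.V2c_axis_ne_zero_of_kt_ne_zero hε (hHK 0).le hkt) hridge
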